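/- Let G be a finite simple graph whose vertex set carries a linear order, and let u < v be distinct vertices. Then u and v are adjacent in G if and only if v ∈ N_⊕(F^{ξ(u,v)}({u})), where ξ(u,v) = min{k ≥ 0 : v ∈ I_{F^k({u})} or F^k({u}) = ∅}. -/

import Mathlib

/-!
Write `M_k = F^k({u})`. As long as `k ≤ ξ(u,v)`, all elements of `M_k` are smaller than `v`, and
`v ∈ N_⊕(M_k)` holds exactly if `u` and `v` are adjacent; this is proved by induction on `k`.
In the inductive step `v ∉ I_{M_k}` and `M_k` lies below `v`, so `t = τ(M_k) < v`. The map `F`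
replaces some `x ∈ M_k` with `τ(x) = t` by `F₀(x) ⊆ B_t`, whose elements are `≤ t < v`, and
`N(x)` and `N_⊕(F₀(x))` agree above `t`, in particular at `v` (`step`).
The existence of `F₀(x)` is the fact that the sets `N^{>t}(b)`, `b ∈ B_t`, span all sets
`N^{>t}(y)` with `y ≤ t` over the two-element field (`exists_basis`).

The argument does not depend on which element `x` attaining `τ(M_k)` is chosen. Nor does it
need `ξ(u,v)` to be a minimum over a nonempty set: if the set were empty, `sInf` would return `0`,
and the claim holds for `k = 0`.
-/

open scoped Classical symmDiff

variable {V : Type}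

/-- `N^{>t}(v)`: the neighbors of `v` that are greater than `t`. -/
def Ngt (G : SimpleGraph V) [LT V] (t v : V) : Set V := {w | G.Adj v w ∧ t < w}

/-- `N_⊕(M)`: the symmetric difference `⊕_{v ∈ M} N(v)` of the neighborhoods of the
vertices of `M`, i.e. the set of vertices adjacent to an odd number of elements of `M`. -/
noncomputable def NSym (G : SimpleGraph V) (M : Finset V) : Set V :=
  {w | Odd (M.filter (fun v => G.Adj v w)).card}

/-- `N_⊕^{>t}(M) = N_⊕(M) ∩ V^{>t}`. -/
noncomputable def NSymGt (G : SimpleGraph V) [LT V] (t : V) (M : Finset V) : Set V :=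
  NSym G M ∩ {w | t < w}

/-- The active basis `B_t`: the set of vertices `v ≤ t` such that `N^{>t}(v)` is not the
symmetric difference of the `N^{>t}`-neighborhoods of a set of vertices smaller than `v`. -/
noncomputable def Bset [Fintype V] [LinearOrder V] (G : SimpleGraph V) (t : V) : Finset V :=
  Finset.univ.filter (fun v => v ≤ t ∧
    ¬ ∃ B : Finset V, (∀ b ∈ B, b < v) ∧ Ngt G t v = NSymGt G t B)

/-- `τ(v)`: the least `t ≥ v` with `v ∉ B_t`.  (It exists since `v ∉ B_{max V}`; the
maximum of `V` is inserted only to make the minimum well-defined.) -/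
noncomputable def tau [Fintype V] [LinearOrder V] [Nonempty V] (G : SimpleGraph V) (v : V) :
    V :=
  (insert (Finset.univ.max' Finset.univ_nonempty)
    (Finset.univ.filter (fun t => v ≤ t ∧ v ∉ Bset G t))).min' (Finset.insert_nonempty _ _)

/-- `τ(M) = min_{v ∈ M} τ(v)` for a nonempty finset `M` (junk value for `M = ∅`). -/
noncomputable def tauSet [Fintype V] [LinearOrder V] [Nonempty V] (G : SimpleGraph V)
    (M : Finset V) : V :=
  if h : M.Nonempty then (M.image (tau G)).min' (h.image _)
  else Finset.univ.max' Finset.univ_nonempty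

/-- A nonempty set `M` is active if `max M < τ(M)`. -/
def ActiveSet [Fintype V] [LinearOrder V] [Nonempty V] (G : SimpleGraph V) (M : Finset V) :
    Prop :=
  ∃ h : M.Nonempty, M.max' h < tauSet G M

/-- Membership in the collection `Z`: the empty set, the singletons, and the active sets. -/
def Zmem [Fintype V] [LinearOrder V] [Nonempty V] (G : SimpleGraph V) (M : Finset V) : Prop :=
  M = ∅ ∨ (∃ v : V, M = {v}) ∨ ActiveSet G M

/-- `F₀(v)`: the unique subset `B` of `B_{τ(v)}` with `N^{>τ(v)}(v) = N_⊕^{>τ(v)}(B)`. -/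
noncomputable def F0 [Fintype V] [LinearOrder V] [Nonempty V] (G : SimpleGraph V) (v : V) :
    Finset V :=
  if h : ∃ B : Finset V, B ⊆ Bset G (tau G v) ∧ Ngt G (tau G v) v = NSymGt G (tau G v) B
  then h.choose else ∅

/-- The map `F`: `F(∅) = ∅` and `F(M) = M ∆ {v} ∆ F₀(v)` where `v` is the (for `M ∈ Z`,
unique) element of `M` with `τ(v) = τ(M)`. -/
noncomputable def Fmap [Fintype V] [LinearOrder V] [Nonempty V] (G : SimpleGraph V)
    (M : Finset V) : Finset V :=
  if h : ∃ v ∈ M, tau G v = tauSet G M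
  then (M ∆ {h.choose}) ∆ F0 G h.choose
  else ∅

/-- `I_M = ∩_{v ∈ M} [v, τ(v)]`, the intersection of the activity intervals of the
elements of `M`. -/
def Iset [Fintype V] [LinearOrder V] [Nonempty V] (G : SimpleGraph V) (M : Finset V) :
    Set V :=
  ⋂ v ∈ M, Set.Icc v (tau G v)

/-- `ξ(u,v)`: the least `k` such that `v ∈ I_{F^k({u})}` or `F^k({u}) = ∅`. -/
noncomputable def xi [Fintype V] [LinearOrder V] [Nonempty V] (G : SimpleGraph V) (u v : V) :
    ℕ :=
  sInf {k : ℕ | v ∈ Iset G ((Fmap G)^[k] {u}) ∨ (Fmap G)^[k] {u} = ∅}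

/-- Membership in `N_⊕` is additive over the two-element field. -/
lemma mem_NSym_symmDiff [DecidableEq V] (G : SimpleGraph V) (A B : Finset V) (w : V) :
    w ∈ NSym G (A ∆ B) ↔ ¬ (w ∈ NSym G A ↔ w ∈ NSym G B) := by
  have hpar : ∀ S T : Finset V, Odd (S ∆ T).card ↔ ¬ (Odd S.card ↔ Odd T.card) := by
    intro S T
    have h0 : (S ∆ T).card = (S \ T).card + (T \ S).card :=
      Finset.card_union_of_disjoint disjoint_sdiff_sdiff
    have h1 := Finset.card_sdiff_add_card_inter S T
    have h2 := Finset.card_sdiff_add_card_inter T S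
    rw [Finset.inter_comm] at h2
    simp only [Nat.odd_iff]
    omega
  have hf : (A ∆ B).filter (fun v => G.Adj v w)
      = (A.filter (fun v => G.Adj v w)) ∆ (B.filter (fun v => G.Adj v w)) := by
    ext x
    simp only [Finset.mem_filter, Finset.mem_symmDiff]
    tauto
  simp only [NSym, Set.mem_ofPred_eq]
  rw [hf, hpar]

lemma mem_NSym_singleton (G : SimpleGraph V) (x w : V) :
    w ∈ NSym G {x} ↔ G.Adj x w := by
  by_cases h : G.Adj x w <;> simp [NSym, Finset.filter_singleton, h]

lemma Ngt_eq_NSymGt_iff [LinearOrder V] (G : SimpleGraph V) (t x : V) (B : Finset V) :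
    Ngt G t x = NSymGt G t B ↔ ∀ w, t < w → (G.Adj x w ↔ w ∈ NSym G B) := by
  simp only [Ngt, NSymGt, Set.ext_iff, Set.mem_inter_iff, Set.mem_ofPred_eq]
  exact forall_congr' fun w => by tauto

/-- If `N^{>t}(b)` lies in the span of `B_t` for every `b ∈ S`, then so does `N_⊕^{>t}(S)`. -/
lemma exists_basis_finset [Fintype V] [LinearOrder V] (G : SimpleGraph V) (t : V) (S : Finset V)
    (hS : ∀ b ∈ S, ∃ B ⊆ Bset G t, ∀ w, t < w → (G.Adj b w ↔ w ∈ NSym G B)) :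
    ∃ B ⊆ Bset G t, ∀ w, t < w → (w ∈ NSym G S ↔ w ∈ NSym G B) := by
  induction S using Finset.induction_on with
  | empty => exact ⟨∅, by simp, fun _ _ => Iff.rfl⟩
  | insert a S ha ih =>
    obtain ⟨B₁, hB₁, h₁⟩ := ih fun b hb => hS b (Finset.mem_insert_of_mem hb)
    obtain ⟨B₂, hB₂, h₂⟩ := hS a (Finset.mem_insert_self a S)
    have hins : insert a S = {a} ∆ S := by
      ext x
      simp only [Finset.mem_insert, Finset.mem_symmDiff, Finset.mem_singleton]
      by_cases hx : x = a
      · subst hx; simp [ha]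
      · simp [hx]
    refine ⟨B₂ ∆ B₁, fun x hx => ?_, fun w hw => ?_⟩
    · rcases Finset.mem_symmDiff.1 hx with h | h
      · exact hB₂ h.1
      · exact hB₁ h.1
    · rw [hins, mem_NSym_symmDiff, mem_NSym_symmDiff, mem_NSym_singleton, h₁ w hw, h₂ w hw]

/-- The active basis `B_t` spans the sets `N^{>t}(y)` for all `y ≤ t`. -/
lemma exists_basis [Fintype V] [LinearOrder V] (G : SimpleGraph V) (t y : V) (hy : y ≤ t) :
    ∃ B ⊆ Bset G t, ∀ w, t < w → (G.Adj y w ↔ w ∈ NSym G B) := by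
  induction y using WellFoundedLT.induction with
  | _ y ih =>
    by_cases hB : y ∈ Bset G t
    · exact ⟨{y}, by simpa using hB, fun w _ => (mem_NSym_singleton G y w).symm⟩
    · have hex : ∃ B : Finset V, (∀ b ∈ B, b < y) ∧ Ngt G t y = NSymGt G t B := by
        by_contra hne
        exact hB (by simp only [Bset, Finset.mem_filter]; exact ⟨Finset.mem_univ _, hy, hne⟩)
      obtain ⟨S, hSlt, hS⟩ := hex
      rw [Ngt_eq_NSymGt_iff] at hS
      obtain ⟨B, hBs, h⟩ :=
        exists_basis_finset G t S fun b hb => ih b (hSlt b hb) ((hSlt b hb).le.trans hy)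
      exact ⟨B, hBs, fun w hw => (hS w hw).trans (h w hw)⟩

lemma le_tau [Fintype V] [LinearOrder V] [Nonempty V] (G : SimpleGraph V) (x : V) :
    x ≤ tau G x := by
  refine Finset.le_min' _ _ _ fun t ht => ?_
  rcases Finset.mem_insert.1 ht with rfl | ht
  · exact Finset.le_max' _ _ (Finset.mem_univ _)
  · exact (Finset.mem_filter.1 ht).2.1

lemma F0_spec [Fintype V] [LinearOrder V] [Nonempty V] (G : SimpleGraph V) (x : V) :
    F0 G x ⊆ Bset G (tau G x) ∧
      ∀ w, tau G x < w → (G.Adj x w ↔ w ∈ NSym G (F0 G x)) := by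
  have h : ∃ B : Finset V, B ⊆ Bset G (tau G x) ∧ Ngt G (tau G x) x = NSymGt G (tau G x) B := by
    obtain ⟨B, hB, hw⟩ := exists_basis G (tau G x) x (le_tau G x)
    exact ⟨B, hB, (Ngt_eq_NSymGt_iff G _ _ _).2 hw⟩
  rw [← Ngt_eq_NSymGt_iff, F0, dif_pos h]
  exact h.choose_spec

/-- If `M` is nonempty and lies below `v`, and `v ∉ I_M`, then `F(M)` lies below `v` too, and
`v` belongs to `N_⊕(F(M))` exactly if it belongs to `N_⊕(M)`. -/
lemma step [Fintype V] [LinearOrder V] [Nonempty V] (G : SimpleGraph V) (v : V) (M : Finset V)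
    (hlt : ∀ x ∈ M, x < v) (hne : M ≠ ∅) (hI : v ∉ Iset G M) :
    (∀ x ∈ Fmap G M, x < v) ∧ (v ∈ NSym G (Fmap G M) ↔ v ∈ NSym G M) := by
  have hne' : M.Nonempty := Finset.nonempty_iff_ne_empty.2 hne
  have hτ : tauSet G M = (M.image (tau G)).min' (hne'.image _) := dif_pos hne'
  have hex : ∃ x ∈ M, tau G x = tauSet G M := by
    rw [hτ]
    exact Finset.mem_image.1 (Finset.min'_mem _ (hne'.image _))
  have htv : tauSet G M < v := by
    by_contra hge
    refine hI (Set.mem_iInter₂.2 fun x hx => ⟨(hlt x hx).le, (not_lt.1 hge).trans ?_⟩)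
    rw [hτ]
    exact Finset.min'_le _ _ (Finset.mem_image_of_mem _ hx)
  rw [Fmap, dif_pos hex]
  obtain ⟨hxM, hxτ⟩ := hex.choose_spec
  generalize hex.choose = x at hxM hxτ ⊢
  obtain ⟨hsub, hadj⟩ := F0_spec G x
  rw [← hxτ] at htv
  constructor
  · intro y hy
    rcases Finset.mem_symmDiff.1 hy with ⟨hy, -⟩ | ⟨hy, -⟩
    · rcases Finset.mem_symmDiff.1 hy with ⟨hy, -⟩ | ⟨hy, -⟩
      · exact hlt y hy
      · rw [Finset.mem_singleton.1 hy]
        exact hlt x hxM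
    · exact (Finset.mem_filter.1 (hsub hy)).2.1.trans_lt htv
  · rw [mem_NSym_symmDiff, mem_NSym_symmDiff, mem_NSym_singleton, hadj v htv]
    by_cases h : v ∈ NSym G (F0 G x) <;> simp [h]

/-- For `u < v`: `u` and `v` are adjacent iff `v ∈ N_⊕(F^{ξ(u,v)}({u}))`. -/
theorem adj_iff_NSym_iterate [Fintype V] [LinearOrder V] [Nonempty V] (G : SimpleGraph V)
    (u v : V) (huv : u < v) :
    G.Adj u v ↔ v ∈ NSym G ((Fmap G)^[xi G u v] {u}) := by
  have key : ∀ k ≤ xi G u v, (∀ x ∈ (Fmap G)^[k] {u}, x < v) ∧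
      (v ∈ NSym G ((Fmap G)^[k] {u}) ↔ G.Adj u v) := by
    intro k
    induction k with
    | zero =>
      intro _
      exact ⟨by simpa using huv, mem_NSym_singleton G u v⟩
    | succ k ih =>
      intro hk
      obtain ⟨hlt, hiff⟩ := ih (Nat.le_of_succ_le hk)
      have hnot := Nat.notMem_of_lt_sInf (Nat.lt_of_succ_le hk)
      simp only [Set.mem_ofPred_eq, not_or] at hnot
      obtain ⟨h₁, h₂⟩ := step G v _ hlt hnot.2 hnot.1
      rw [Function.iterate_succ_apply']
      exact ⟨h₁, h₂.trans hiff⟩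
  exact (key _ le_rfl).2.symm
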